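/- Let H be a separable complex Hilbert space, let 𝒜 ⊆ B(H) be an abelian von Neumann algebra, and let n₀ ≥ 1 be an integer. Assume that for every finite subset F ⊆ H and every ε > 0 there exists a set X ⊆ H with |X| ≤ n₀ such that every x ∈ F lies at distance strictly less than ε from the linear span of {a ξ : a ∈ 𝒜, ξ ∈ X}. Then there exists a set X ⊆ H with |X| ≤ n₀ such that the closed linear span of {a ξ : a ∈ 𝒜, ξ ∈ X} is all of H, i.e., 𝒜 admits a cyclic set of at most n₀ vectors. -/

import Mathlib

namespace ApproxCyclic

open Polynomial

/-- A monic polynomial over a complex algebra: its values at more than `natDegree` distinct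
complex points generate the unit ideal. -/
lemma ideal_eq_top {R : Type*} [CommRing R] [Algebra ℂ R] (p : R[X]) (hp : p.Monic)
    (S : Finset ℂ) (hS : p.natDegree < S.card) :
    Ideal.span ((fun t : ℂ => p.eval (algebraMap ℂ R t)) '' (S : Set ℂ)) = ⊤ := by
  by_contra hne
  obtain ⟨m, hm, hle⟩ := Ideal.exists_le_maximal _ hne
  letI : Field (R ⧸ m) := Ideal.Quotient.field m
  let q : (R ⧸ m)[X] := p.map (Ideal.Quotient.mk m)
  have hq : q.Monic := hp.map _
  let g : ℂ →+* R ⧸ m := (Ideal.Quotient.mk m).comp (algebraMap ℂ R)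
  have hg : Function.Injective g := g.injective
  have hdeg : q.natDegree ≤ p.natDegree := Polynomial.natDegree_map_le
  classical
  have hroots : (S.image g).val ⊆ q.roots := by
    intro y hy
    have hy' : y ∈ S.image g := hy
    obtain ⟨t, ht, rfl⟩ := Finset.mem_image.1 hy'
    rw [Polynomial.mem_roots hq.ne_zero, Polynomial.IsRoot.def]
    have h0 : p.eval (algebraMap ℂ R t) ∈ m :=
      hle (Ideal.subset_span ⟨t, ht, rfl⟩)
    have h1 : q.eval (g t) = Ideal.Quotient.mk m (p.eval (algebraMap ℂ R t)) := by
      simp only [q, g, RingHom.comp_apply, Polynomial.eval_map_apply]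
    rw [h1]
    exact Ideal.Quotient.eq_zero_iff_mem.2 h0
  have h2 := Polynomial.card_le_degree_of_subset_roots hroots
  rw [Finset.card_image_of_injective _ hg] at h2
  omega

section

variable {H : Type*} [NormedAddCommGroup H] [InnerProductSpace ℂ H]
  {R : Type*} [CommRing R] [Algebra ℂ R] [Module R H] [IsScalarTower ℂ R H]

lemma smul_eq_zero_of_all (p : R[X]) (hp : p.Monic)
    (S : Finset ℂ) (hS : p.natDegree < S.card) (v : H)
    (hv : ∀ t ∈ S, p.eval (algebraMap ℂ R t) • v = 0) : v = 0 := by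
  have h1 : (1 : R) ∈ Ideal.span ((fun t : ℂ => p.eval (algebraMap ℂ R t)) '' (S : Set ℂ)) := by
    rw [ideal_eq_top p hp S hS]; trivial
  have h2 : Ideal.span ((fun t : ℂ => p.eval (algebraMap ℂ R t)) '' (S : Set ℂ)) ≤
      LinearMap.ker (LinearMap.toSpanSingleton R H v) := by
    refine Ideal.span_le.2 ?_
    rintro _ ⟨t, ht, rfl⟩
    simpa using hv t ht
  simpa using h2 h1

lemma glue
    (hproj : ∀ a : R, ∃ e : R, a * e = 0 ∧ (∀ v : H, a • v = 0 → e • v = v) ∧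
      (∀ v : H, ‖e • v‖ ≤ ‖v‖) ∧ (∀ v : H, ‖v - e • v‖ ≤ ‖v‖))
    (p : R[X]) (S : Finset ℂ) :
    ∃ τ : R, (∀ v : H, ‖τ • v‖ ≤ (∑ t ∈ S, ‖t‖) * ‖v‖) ∧
      ∀ v : H, p.eval τ • v = 0 → ∀ t ∈ S, p.eval (algebraMap ℂ R t) • v = 0 := by
  classical
  induction S using Finset.induction_on with
  | empty => exact ⟨0, by simp, by simp⟩
  | insert t S ht ih =>
    obtain ⟨τ, hτ, hker⟩ := ih
    obtain ⟨e, hae, hev, hn1, hn2⟩ := hproj (p.eval τ)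
    have hE : ∀ v : H, e • e • v = e • v := by
      intro v
      refine hev _ ?_
      rw [smul_smul, hae, zero_smul]
    refine ⟨(1 - e) * τ + e * algebraMap ℂ R t, ?_, ?_⟩
    · intro v
      rw [Finset.sum_insert ht, add_mul, add_smul, add_comm]
      refine (norm_add_le _ _).trans (add_le_add ?_ ?_)
      · rw [mul_smul, algebraMap_smul]
        exact (hn1 _).trans (norm_smul_le _ _)
      · rw [mul_smul, sub_smul, one_smul]
        exact (hn2 _).trans (hτ v)
    · intro v hv
      set σ := (1 - e) * τ + e * algebraMap ℂ R t with hσ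
      have key1 : ∀ w : H, (1 - e) • p.eval σ • w = (1 - e) • p.eval τ • w := by
        intro w
        obtain ⟨c, hc⟩ := Polynomial.sub_dvd_eval_sub σ τ p
        have h3 : (1 - e) • p.eval σ • w - (1 - e) • p.eval τ • w
            = (c * (algebraMap ℂ R t - τ)) • ((1 - e) • e • w) := by
          rw [smul_smul, smul_smul, smul_smul, smul_smul, ← sub_smul, ← mul_sub, hc]
          congr 1
          rw [hσ]; ring
        rw [← sub_eq_zero, h3, sub_smul, one_smul, hE, sub_self, smul_zero]
      have key2 : ∀ w : H, e • p.eval σ • w = e • p.eval (algebraMap ℂ R t) • w := by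
        intro w
        obtain ⟨c, hc⟩ := Polynomial.sub_dvd_eval_sub σ (algebraMap ℂ R t) p
        have h3 : e • p.eval σ • w - e • p.eval (algebraMap ℂ R t) • w
            = (c * (τ - algebraMap ℂ R t)) • ((1 - e) • e • w) := by
          rw [smul_smul, smul_smul, smul_smul, smul_smul, ← sub_smul, ← mul_sub, hc]
          congr 1
          rw [hσ]; ring
        rw [← sub_eq_zero, h3, sub_smul, one_smul, hE, sub_self, smul_zero]
      have h1 : p.eval τ • v = 0 := by
        have h := key1 v
        rw [hv, smul_zero, sub_smul, one_smul, smul_smul, mul_comm, hae, zero_smul, sub_zero] at h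
        exact h.symm
      have h2 : e • v = v := hev v h1
      have h3 : p.eval (algebraMap ℂ R t) • v = 0 := by
        have h := key2 v
        rw [hv, smul_zero, smul_comm, h2] at h
        exact h.symm
      intro s hs
      rcases Finset.mem_insert.1 hs with rfl | hs
      · exact h3
      · exact hker v h1 s hs

lemma exists_inj
    (hproj : ∀ a : R, ∃ e : R, a * e = 0 ∧ (∀ v : H, a • v = 0 → e • v = v) ∧
      (∀ v : H, ‖e • v‖ ≤ ‖v‖) ∧ (∀ v : H, ‖v - e • v‖ ≤ ‖v‖))
    (p : R[X]) (hp : p.Monic) (δ : ℝ) (hδ : 0 < δ) :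
    ∃ τ : R, (∀ v : H, ‖τ • v‖ ≤ δ * ‖v‖) ∧ ∀ v : H, p.eval τ • v = 0 → v = 0 := by
  let N := p.natDegree + 1
  have hinf : (Metric.ball (0 : ℂ) (δ / N)).Infinite :=
    infinite_of_mem_nhds (0 : ℂ) (Metric.ball_mem_nhds _ (by positivity))
  obtain ⟨S, hS, hcard⟩ := hinf.exists_subset_card_eq N
  obtain ⟨τ, hτ, hker⟩ := glue hproj p S
  refine ⟨τ, fun v => (hτ v).trans ?_, fun v hv => ?_⟩
  · refine mul_le_mul_of_nonneg_right ?_ (norm_nonneg _)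
    have : ∑ t ∈ S, ‖t‖ ≤ S.card • (δ / N) := by
      refine Finset.sum_le_card_nsmul _ _ _ fun t ht => ?_
      have := hS ht
      rw [mem_ball_zero_iff] at this
      exact this.le
    refine this.trans (le_of_eq ?_)
    have hN : (N : ℝ) ≠ 0 := by positivity
    rw [hcard, nsmul_eq_mul]
    field_simp
  · exact smul_eq_zero_of_all p hp S (by omega) v (hker v hv)

variable [CompleteSpace H]

lemma density (n : ℕ)
    (hcont : ∀ a : R, Continuous (fun v : H => a • v))
    (hadj : ∀ a : R, ∃ b : R, ∀ x y : H, inner ℂ (a • x) y = inner ℂ x (b • y))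
    (hproj : ∀ a : R, ∃ e : R, a * e = 0 ∧ (∀ v : H, a • v = 0 → e • v = v) ∧
      (∀ v : H, ‖e • v‖ ≤ ‖v‖) ∧ (∀ v : H, ‖v - e • v‖ ≤ ‖v‖))
    (happ : ∀ F : Finset H, ∀ ε : ℝ, 0 < ε → ∃ ζ : Fin n → H, ∀ x ∈ F, ∃ a : Fin n → R,
      ‖x - ∑ i, a i • ζ i‖ < ε)
    (ξ : Fin n → H) (δ : ℝ) (hδ : 0 < δ) (x : H) (ε : ℝ) (hε : 0 < ε) :
    ∃ η : Fin n → H, (∀ i, ‖η i - ξ i‖ < δ) ∧ ∃ a : Fin n → R, ‖x - ∑ i, a i • η i‖ < ε := by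
  classical
  obtain ⟨ζ, hζ⟩ := happ (insert x (Finset.univ.image ξ)) (min (δ / 2) (ε / 2)) (by positivity)
  obtain ⟨a, ha⟩ := hζ x (Finset.mem_insert_self _ _)
  have hB : ∀ j, ∃ b : Fin n → R, ‖ξ j - ∑ i, b i • ζ i‖ < min (δ / 2) (ε / 2) := fun j =>
    hζ (ξ j) (Finset.mem_insert_of_mem (Finset.mem_image_of_mem _ (Finset.mem_univ j)))
  choose b hb using hB
  let B : Matrix (Fin n) (Fin n) R := Matrix.of b
  let C : ℝ := ∑ i, ‖ζ i‖
  have hC : 0 ≤ C := Finset.sum_nonneg fun i _ => norm_nonneg _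
  obtain ⟨τ, hτ, hinj⟩ := exists_inj (H := H) hproj (-B).charpoly (Matrix.charpoly_monic _)
    (δ / 2 / (C + 1)) (by positivity)
  rw [Matrix.eval_charpoly] at hinj
  set M : Matrix (Fin n) (Fin n) R := Matrix.scalar (Fin n) τ - -B with hM
  let η : Fin n → H := fun j => ∑ i, M j i • ζ i
  have hη : ∀ j, η j = (∑ i, b j i • ζ i) + τ • ζ j := by
    intro j
    simp only [η, hM, sub_neg_eq_add, Matrix.add_apply, add_smul, Finset.sum_add_distrib, B,
      Matrix.of_apply, Matrix.scalar_apply, Matrix.diagonal_apply, ite_smul, zero_smul,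
      Finset.sum_ite_eq, Finset.mem_univ, if_true]
    rw [add_comm]
  refine ⟨η, fun j => ?_, ?_⟩
  · have h1 : η j - ξ j = τ • ζ j - (ξ j - ∑ i, b j i • ζ i) := by rw [hη]; abel
    have h2 : ‖τ • ζ j‖ ≤ δ / 2 := by
      refine (hτ _).trans ?_
      have h3 : ‖ζ j‖ ≤ C := Finset.single_le_sum (f := fun i => ‖ζ i‖)
        (fun i _ => norm_nonneg _) (Finset.mem_univ j)
      calc δ / 2 / (C + 1) * ‖ζ j‖ ≤ δ / 2 / (C + 1) * (C + 1) := by gcongr; linarith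
        _ = δ / 2 := by field_simp
    have h4 := (hb j).trans_le (min_le_left _ _)
    rw [h1]
    linarith [norm_sub_le (τ • ζ j) (ξ j - ∑ i, b j i • ζ i)]
  · let L : Submodule R H := Submodule.span R (Set.range η)
    let K : Submodule ℂ H := (L.restrictScalars ℂ).topologicalClosure
    have hKcl : IsClosed (K : Set H) := Submodule.isClosed_topologicalClosure _
    haveI : CompleteSpace K := hKcl.completeSpace_coe
    have hKinv : ∀ (r : R) (v : H), v ∈ K → r • v ∈ K := by
      intro r v hv
      exact map_mem_closure (hcont r) hv (fun w hw => L.smul_mem r hw)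
    have hdet : ∀ i, M.det • ζ i ∈ L := by
      intro i
      have h1 : M.det • ζ i = ∑ j, M.adjugate i j • η j := by
        have h2 : ∀ k, ∑ j, M.adjugate i j * M j k = if i = k then M.det else 0 := by
          intro k
          have := congrFun (congrFun (Matrix.adjugate_mul M) i) k
          simpa [Matrix.mul_apply, Matrix.one_apply] using this
        simp only [η, Finset.smul_sum, smul_smul]
        rw [Finset.sum_comm]
        simp only [← Finset.sum_smul, h2, ite_smul, zero_smul, Finset.sum_ite_eq,
          Finset.mem_univ, if_true]
      rw [h1]
      exact Submodule.sum_mem _ fun j _ => L.smul_mem _ (Submodule.subset_span ⟨j, rfl⟩)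
    have hmem : ∀ i, ζ i ∈ K := by
      intro i
      obtain ⟨k, hk, w, hw, hkw⟩ := K.exists_add_mem_mem_orthogonal (ζ i)
      have h1 : M.det • w ∈ K := by
        have : M.det • w = M.det • ζ i - M.det • k := by rw [hkw, smul_add]; abel
        rw [this]
        exact K.sub_mem (subset_closure (hdet i)) (hKinv _ _ hk)
      have h2 : M.det • w ∈ Kᗮ := by
        obtain ⟨c, hc⟩ := hadj M.det
        rw [Submodule.mem_orthogonal']
        intro u hu
        rw [hc]
        exact (Submodule.mem_orthogonal' _ _).1 hw _ (hKinv _ _ hu)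
      have h3 : M.det • w = 0 := by
        have := (Submodule.mem_orthogonal' _ _).1 h2 _ h1
        exact inner_self_eq_zero.1 this
      rw [hkw, hinj w h3, add_zero]
      exact hk
    have hy : ∑ i, a i • ζ i ∈ K := Submodule.sum_mem _ fun i _ => hKinv _ _ (hmem i)
    obtain ⟨z, hz, hdz⟩ := Metric.mem_closure_iff.1 hy (ε / 2) (by positivity)
    obtain ⟨c, rfl⟩ := (Submodule.mem_span_range_iff_exists_fun R).1 hz
    refine ⟨c, ?_⟩
    rw [dist_eq_norm] at hdz
    have h4 := ha.trans_le (min_le_right _ _)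
    have h5 := norm_add_le (x - ∑ i, a i • ζ i) (∑ i, a i • ζ i - ∑ i, c i • η i)
    rw [sub_add_sub_cancel] at h5
    linarith

lemma main [TopologicalSpace.SeparableSpace H] (n : ℕ)
    (hcont : ∀ a : R, Continuous (fun v : H => a • v))
    (hadj : ∀ a : R, ∃ b : R, ∀ x y : H, inner ℂ (a • x) y = inner ℂ x (b • y))
    (hproj : ∀ a : R, ∃ e : R, a * e = 0 ∧ (∀ v : H, a • v = 0 → e • v = v) ∧
      (∀ v : H, ‖e • v‖ ≤ ‖v‖) ∧ (∀ v : H, ‖v - e • v‖ ≤ ‖v‖))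
    (happ : ∀ F : Finset H, ∀ ε : ℝ, 0 < ε → ∃ ζ : Fin n → H, ∀ x ∈ F, ∃ a : Fin n → R,
      ‖x - ∑ i, a i • ζ i‖ < ε) :
    ∃ ζ : Fin n → H, ∀ x : H, ∀ ε : ℝ, 0 < ε → ∃ a : Fin n → R, ‖x - ∑ i, a i • ζ i‖ < ε := by
  let d := TopologicalSpace.denseSeq H
  let U : ℕ × ℕ → Set (Fin n → H) := fun k =>
    {η | ∃ a : Fin n → R, ‖d k.1 - ∑ i, a i • η i‖ < 1 / ((k.2 : ℝ) + 1)}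
  have hopen : ∀ k, IsOpen (U k) := by
    intro k
    have : U k = ⋃ a : Fin n → R,
        {η : Fin n → H | ‖d k.1 - ∑ i, a i • η i‖ < 1 / ((k.2 : ℝ) + 1)} := by
      ext η; simp [U]
    rw [this]
    refine isOpen_iUnion fun a => isOpen_lt ?_ continuous_const
    refine (continuous_const.sub (continuous_finsetSum _ fun i _ => ?_)).norm
    exact (hcont (a i)).comp (continuous_apply i)
  have hdense : ∀ k, Dense (U k) := by
    intro k
    rw [Metric.dense_iff]
    intro ξ r hr
    obtain ⟨η, hη, ha⟩ := density n hcont hadj hproj happ ξ r hr (d k.1) (1 / ((k.2 : ℝ) + 1))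
      (by positivity)
    refine ⟨η, ?_, ha⟩
    rw [Metric.mem_ball, dist_pi_lt_iff hr]
    intro i
    rw [dist_eq_norm]
    exact hη i
  obtain ⟨ζ, hζ⟩ := (dense_iInter_of_isOpen hopen hdense).nonempty
  refine ⟨ζ, fun x ε hε => ?_⟩
  obtain ⟨_, hy, ⟨k, rfl⟩⟩ := Metric.dense_iff.1 (TopologicalSpace.denseRange_denseSeq H) x (ε / 2)
    (by positivity)
  obtain ⟨m, hm⟩ := exists_nat_one_div_lt (show 0 < ε / 2 by positivity)
  obtain ⟨a, ha⟩ := Set.mem_iInter.1 hζ (k, m)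
  refine ⟨a, ?_⟩
  rw [Metric.mem_ball, dist_comm, dist_eq_norm] at hy
  have h5 := norm_add_le (x - d k) (d k - ∑ i, a i • ζ i)
  rw [sub_add_sub_cancel] at h5
  simp only at ha
  have : ‖x - d k‖ < ε / 2 := hy
  linarith

end

section

variable {H : Type*} [NormedAddCommGroup H] [InnerProductSpace ℂ H] [CompleteSpace H]

lemma vn_proj (𝒜 : VonNeumannAlgebra H) (a : H →L[ℂ] H) (ha : a ∈ 𝒜) :
    ∃ e ∈ 𝒜, a * e = 0 ∧ (∀ v : H, a v = 0 → e v = v) ∧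
      (∀ v : H, ‖e v‖ ≤ ‖v‖) ∧ (∀ v : H, ‖v - e v‖ ≤ ‖v‖) := by
  let K : Submodule ℂ H := LinearMap.ker (a : H →ₗ[ℂ] H)
  have hKcl : IsClosed (K : Set H) := a.isClosed_ker
  haveI : CompleteSpace K := hKcl.completeSpace_coe
  refine ⟨K.starProjection, ?_, ?_, ?_, ?_, ?_⟩
  · rw [VonNeumannAlgebra.IsStarProjection.mem_iff isStarProjection_starProjection]
    intro y hy
    have hr : K.starProjection.range = K := by simp
    rw [hr, Module.End.mem_invtSubmodule]
    intro v hv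
    have hc := (VonNeumannAlgebra.mem_commutant_iff.1 hy) a ha
    have hv' : a v = 0 := hv
    have h1 : a (y v) = y (a v) := congrArg (fun f : H →L[ℂ] H => f v) hc
    change a (y v) = 0
    rw [h1, hv', map_zero]
  · ext v
    have : K.starProjection v ∈ K := Submodule.starProjection_apply_mem _ _
    exact this
  · intro v hv
    exact Submodule.starProjection_eq_self_iff.2 hv
  · intro v
    exact Submodule.norm_starProjection_apply_le _ _
  · intro v
    have h : v - K.starProjection v = Kᗮ.starProjection v := by
      rw [Submodule.starProjection_orthogonal_val]
    rw [h]
    exact Submodule.norm_starProjection_apply_le _ _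

end

end ApproxCyclic

/-- Proposition 3.4 (2° ⟺ 3°), the nontrivial direction: for an abelian von Neumann algebra
`𝒜` on a separable Hilbert space, approximate `n₀`-cyclicity implies the existence of a
cyclic set of at most `n₀` vectors. -/
theorem abelian_vonNeumann_approx_cyclic_implies_cyclic
    (H : Type*) [NormedAddCommGroup H] [InnerProductSpace ℂ H] [CompleteSpace H]
    [TopologicalSpace.SeparableSpace H]
    (𝒜 : VonNeumannAlgebra H)
    (habelian : ∀ x ∈ 𝒜, ∀ y ∈ 𝒜, x * y = y * x)
    (n₀ : ℕ) (hn₀ : 1 ≤ n₀)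
    (happrox : ∀ F : Finset H, ∀ ε : ℝ, 0 < ε →
      ∃ X : Finset H, X.card ≤ n₀ ∧
        ∀ x ∈ F, ∃ v ∈ Submodule.span ℂ
          {w : H | ∃ a : H →L[ℂ] H, a ∈ 𝒜 ∧ ∃ ξ ∈ X, w = a ξ}, ‖x - v‖ < ε) :
    ∃ X : Finset H, X.card ≤ n₀ ∧
      (Submodule.span ℂ
        {w : H | ∃ a : H →L[ℂ] H, a ∈ 𝒜 ∧ ∃ ξ ∈ X, w = a ξ}).topologicalClosure = ⊤ := by
  classical
  let R := 𝒜.toStarSubalgebra.toSubalgebra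
  letI : CommRing R :=
    { (inferInstance : Ring R) with
      mul_comm := fun x y => Subtype.ext (habelian x.1 x.2 y.1 y.2) }
  haveI : IsScalarTower ℂ R H := ⟨fun c a v => rfl⟩
  have hspan : ∀ (n : ℕ) (X : Finset H) (ζ : Fin n → H), (∀ ξ ∈ X, ∃ i, ξ = ζ i) →
      ∀ v ∈ Submodule.span ℂ {w : H | ∃ a : H →L[ℂ] H, a ∈ 𝒜 ∧ ∃ ξ ∈ X, w = a ξ},
      ∃ a : Fin n → R, v = ∑ i, a i • ζ i := by
    intro n X ζ hX v hv
    induction hv using Submodule.span_induction with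
    | mem w hw =>
      obtain ⟨a, ha, ξ, hξ, rfl⟩ := hw
      obtain ⟨i, rfl⟩ := hX ξ hξ
      refine ⟨fun j => if j = i then ⟨a, ha⟩ else 0, ?_⟩
      simp only [ite_smul, zero_smul, Finset.sum_ite_eq', Finset.mem_univ, if_true]
      rfl
    | zero => exact ⟨0, by simp⟩
    | add x y _ _ hx hy =>
      obtain ⟨a, rfl⟩ := hx
      obtain ⟨b, rfl⟩ := hy
      exact ⟨a + b, by simp [add_smul, Finset.sum_add_distrib]⟩
    | smul c x _ hx =>
      obtain ⟨a, rfl⟩ := hx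
      refine ⟨fun i => c • a i, ?_⟩
      rw [Finset.smul_sum]
      rfl
  obtain ⟨ζ, hζ⟩ := ApproxCyclic.main (H := H) (R := R) n₀
    (fun a => (a.1 : H →L[ℂ] H).continuous)
    (fun a => ⟨⟨star a.1, star_mem (S := VonNeumannAlgebra H) (s := 𝒜) a.2⟩, fun x y =>
      (ContinuousLinearMap.adjoint_inner_right (a.1) x y).symm⟩)
    (fun a => by
      obtain ⟨e, he, h1, h2, h3, h4⟩ := ApproxCyclic.vn_proj 𝒜 a.1 a.2
      exact ⟨⟨e, he⟩, Subtype.ext h1, h2, h3, h4⟩)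
    (fun F ε hε => by
      obtain ⟨X, hX, h⟩ := happrox F ε hε
      refine ⟨fun i => X.toList.getD i 0, fun x hx => ?_⟩
      obtain ⟨v, hv, hxv⟩ := h x hx
      obtain ⟨a, rfl⟩ := hspan n₀ X (fun i => X.toList.getD i 0) (fun ξ hξ => by
        obtain ⟨k, hk, hk'⟩ := List.getElem_of_mem (Finset.mem_toList.2 hξ)
        refine ⟨⟨k, ?_⟩, ?_⟩
        · rw [Finset.length_toList] at hk
          omega
        · exact ((List.getD_eq_getElem _ _ hk).trans hk').symm) v hv
      exact ⟨a, hxv⟩)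
  refine ⟨Finset.univ.image ζ, Finset.card_image_le.trans (by simp), ?_⟩
  rw [eq_top_iff]
  intro x _
  refine Metric.mem_closure_iff.2 fun ε hε => ?_
  obtain ⟨a, ha⟩ := hζ x ε hε
  refine ⟨∑ i, a i • ζ i, ?_, by rwa [dist_eq_norm]⟩
  refine Submodule.sum_mem _ fun i _ => Submodule.subset_span ?_
  exact ⟨(a i).1, (a i).2, ζ i, Finset.mem_image_of_mem _ (Finset.mem_univ i), rfl⟩
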